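/- arXiv:1601.01452 — 2 statements merged into one kernel-verified Lean document; each statement's English description precedes it below -/
import Mathlib

section
/- Let (X_i)_{i≥1} be a sequence of real numbers. The series ∑_{i=1}^∞ X_i fails to converge if and only if for every nonnegative, nonincreasing sequence (c_j)_{j≥1} with c_j → 0 there exists a sequence (n_j)_{j≥1} of positive integers such that the recursive posterior mean E_k (formed from the block sums S_j determined by (n_j) and the indicators y_j = 1{|S_j| ≤ c_j}) tends to 0 as k → ∞. -/
open Filter

/-- Block sum `S_j = ∑_{i = N_{j-1}+1}^{N_j} X_i` where `N_j = n_1 + ⋯ + n_j`. -/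
noncomputable def blockSum (X : ℕ → ℝ) (n : ℕ → ℕ) (j : ℕ) : ℝ :=
  ∑ i ∈ Finset.Icc ((∑ l ∈ Finset.Icc 1 (j - 1), n l) + 1) (∑ l ∈ Finset.Icc 1 j, n l), X i

/-- Recursive Bayesian posterior mean at stage `k`:
`E_k = (∑_{j=1}^k j⁻² + ∑_{j=1}^k y_j) / (k + 2 ∑_{j=1}^k j⁻²)`. -/
noncomputable def postMean (y : ℕ → ℝ) (k : ℕ) : ℝ :=
  ((∑ j ∈ Finset.Icc 1 k, ((j : ℝ) ^ 2)⁻¹) + ∑ j ∈ Finset.Icc 1 k, y j) /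
    ((k : ℝ) + 2 * ∑ j ∈ Finset.Icc 1 k, ((j : ℝ) ^ 2)⁻¹)

lemma aux_sum_split (X : ℕ → ℝ) {a b : ℕ} (h : a ≤ b) :
    ∑ i ∈ Finset.Icc (a + 1) b, X i
      = ∑ i ∈ Finset.Icc 1 b, X i - ∑ i ∈ Finset.Icc 1 a, X i := by
  induction b, h using Nat.le_induction with
  | base => simp
  | succ b hb ih =>
    rw [Finset.sum_Icc_succ_top (by omega), Finset.sum_Icc_succ_top (by omega), ih]
    ring

lemma aux_mono (n : ℕ → ℕ) (j : ℕ) :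
    ∑ l ∈ Finset.Icc 1 (j - 1), n l ≤ ∑ l ∈ Finset.Icc 1 j, n l :=
  Finset.sum_le_sum_of_subset (Finset.Icc_subset_Icc le_rfl (by omega))

lemma aux_ge (n : ℕ → ℕ) (hn : ∀ j, 0 < n j) (j : ℕ) :
    j ≤ ∑ l ∈ Finset.Icc 1 j, n l := by
  calc j = ∑ l ∈ Finset.Icc 1 j, 1 := by simp
    _ ≤ _ := Finset.sum_le_sum fun l _ => hn l

lemma aux_block (X : ℕ → ℝ) (n : ℕ → ℕ) (j : ℕ) :
    blockSum X n j = ∑ i ∈ Finset.Icc 1 (∑ l ∈ Finset.Icc 1 j, n l), X i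
      - ∑ i ∈ Finset.Icc 1 (∑ l ∈ Finset.Icc 1 (j - 1), n l), X i :=
  aux_sum_split X (aux_mono n j)

lemma aux_nonneg (k : ℕ) : 0 ≤ ∑ j ∈ Finset.Icc 1 k, ((j : ℝ) ^ 2)⁻¹ :=
  Finset.sum_nonneg fun _ _ => by positivity

lemma aux_forward (y : ℕ → ℝ) (hy : ∀ j, 0 ≤ y j) (J : ℕ) (hJ : ∀ j, J ≤ j → y j = 0) :
    Tendsto (postMean y) atTop (nhds 0) := by
  have h1 : Summable (fun j : ℕ => ((j : ℝ) ^ 2)⁻¹) :=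
    Real.summable_nat_pow_inv.2 (by norm_num)
  have h2 : Summable y := summable_of_ne_finset_zero (s := Finset.range J) fun j hj =>
    hJ j (by simpa using hj)
  have h3 : ∀ k, 0 ≤ ∑ j ∈ Finset.Icc 1 k, y j := fun k => Finset.sum_nonneg fun j _ => hy j
  refine squeeze_zero' (g := fun k : ℕ => ((∑' j : ℕ, ((j : ℝ) ^ 2)⁻¹) + ∑' j, y j) / (k : ℝ))
    ?_ ?_ (tendsto_const_div_atTop_nhds_zero_nat _)
  · refine Eventually.of_forall fun k => ?_
    have := h3 k
    have := aux_nonneg k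
    unfold postMean
    positivity
  · filter_upwards [eventually_gt_atTop 0] with k hk
    have a1 := aux_nonneg k
    have a2 := h1.sum_le_tsum (Finset.Icc 1 k) fun j _ => by positivity
    have a3 := h2.sum_le_tsum (Finset.Icc 1 k) fun j _ => hy j
    have hk' : (0 : ℝ) < k := by exact_mod_cast hk
    have := h3 k
    unfold postMean
    apply div_le_div₀ <;> linarith

lemma aux_backward (y : ℕ → ℝ) (hy : ∀ j, 1 ≤ j → y j = 1) :
    ¬ Tendsto (postMean y) atTop (nhds 0) := by
  intro h
  have h' : ∀ᶠ k in atTop, (1 / 2 : ℝ) ≤ postMean y k := by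
    filter_upwards [eventually_gt_atTop 0] with k hk
    have a1 := aux_nonneg k
    have hk' : (0 : ℝ) < k := by exact_mod_cast hk
    have : ∑ j ∈ Finset.Icc 1 k, y j = k := by
      rw [Finset.sum_congr rfl fun j hj => hy j (Finset.mem_Icc.1 hj).1]
      simp
    unfold postMean
    rw [this, div_le_div_iff₀ (by norm_num) (by linarith)]
    linarith
  have := ge_of_tendsto h h'
  norm_num at this

lemma aux_step (P : ℕ → ℝ) (h : ¬ ∃ l, Tendsto P atTop (nhds l)) :
    ∃ ε > 0, ∀ M, ∃ m, M < m ∧ ε ≤ |P m - P M| := by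
  by_contra! hc
  apply h
  apply cauchySeq_tendsto_of_complete
  rw [Metric.cauchySeq_iff']
  intro ε hε
  obtain ⟨M, hM⟩ := hc ε hε
  refine ⟨M, fun n hn => ?_⟩
  rcases eq_or_lt_of_le hn with rfl | hn
  · simpa using hε
  · exact hM n hn

lemma aux_c (P : ℕ → ℝ) (l : ℝ) (h : Tendsto P atTop (nhds l)) :
    ∃ c : ℕ → ℝ, (∀ j, 0 ≤ c j) ∧ Antitone c ∧ Tendsto c atTop (nhds 0) ∧
      ∀ j a b, j - 1 ≤ a → j - 1 ≤ b → |P a - P b| ≤ c j := by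
  have hr : Tendsto (fun a => |P a - l|) atTop (nhds 0) := by
    have := (h.sub_const l).abs
    simpa using this
  obtain ⟨B, hB⟩ := hr.bddAbove_range
  have hB' : ∀ a, |P a - l| ≤ B := fun a => hB ⟨a, rfl⟩
  have bdd : ∀ j, BddAbove (Set.range fun a => |P (a + (j - 1)) - l|) := fun j =>
    ⟨B, by rintro _ ⟨a, rfl⟩; exact hB' _⟩
  have key : ∀ j a, j - 1 ≤ a → |P a - l| ≤ ⨆ a, |P (a + (j - 1)) - l| := by
    intro j a ha
    have := le_ciSup (bdd j) (a - (j - 1))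
    simpa [Nat.sub_add_cancel ha] using this
  have nn : ∀ j, 0 ≤ ⨆ a, |P (a + (j - 1)) - l| := fun j =>
    Real.iSup_nonneg fun a => abs_nonneg _
  refine ⟨fun j => 2 * ⨆ a, |P (a + (j - 1)) - l|, fun j => ?_, ?_, ?_, ?_⟩
  · have := nn j
    positivity
  · intro i j hij
    have : (⨆ a, |P (a + (j - 1)) - l|) ≤ ⨆ a, |P (a + (i - 1)) - l| :=
      ciSup_le fun a => key i _ (by omega)
    simpa using this
  · rw [Metric.tendsto_atTop] at hr ⊢
    intro ε hε
    obtain ⟨N, hN⟩ := hr (ε / 4) (by positivity)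
    refine ⟨N + 1, fun j hj => ?_⟩
    have h1 : (⨆ a, |P (a + (j - 1)) - l|) ≤ ε / 4 := ciSup_le fun a => by
      have := hN (a + (j - 1)) (by omega)
      simp at this
      exact this.le
    have h2 := nn j
    rw [Real.dist_eq, sub_zero, abs_of_nonneg (by positivity)]
    linarith
  · intro j a b ha hb
    have h1 := key j a ha
    have h2 := key j b hb
    have h3 := abs_sub_le (P a) l (P b)
    rw [abs_sub_comm l] at h3
    show _ ≤ 2 * _
    linarith

/-- `∑ Xᵢ` fails to converge iff for every nonnegative
nonincreasing sequence `c_j → 0` there is a sequence of positive block lengths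
for which the recursive posterior mean tends to `0`. -/
theorem not_convergence_iff_posterior_mean_tendsto_zero (X : ℕ → ℝ) :
    (¬ ∃ l : ℝ, Tendsto (fun N : ℕ => ∑ i ∈ Finset.Icc 1 N, X i) atTop (nhds l)) ↔
    (∀ c : ℕ → ℝ, (∀ j, 0 ≤ c j) → Antitone c → Tendsto c atTop (nhds 0) →
      ∃ n : ℕ → ℕ, (∀ j, 0 < n j) ∧
        Tendsto (postMean (fun j => if |blockSum X n j| ≤ c j then (1 : ℝ) else 0))
          atTop (nhds 0)) := by
  constructor
  · intro h c hc0 hca hc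
    obtain ⟨ε, hε, hstep⟩ := aux_step _ h
    choose f hf hfε using hstep
    let N : ℕ → ℕ := fun j => f^[j] 0
    have hN : ∀ j, N (j + 1) = f (N j) := fun j => Function.iterate_succ_apply' f j 0
    let n : ℕ → ℕ := fun j => if j = 0 then 1 else N j - N (j - 1)
    have hlt : ∀ j, N j < N (j + 1) := fun j => by rw [hN]; exact hf _
    have hsum : ∀ j, ∑ l ∈ Finset.Icc 1 j, n l = N j := by
      intro j
      induction j with
      | zero => simp [N]
      | succ j ih =>
        rw [Finset.sum_Icc_succ_top (by omega), ih]
        have := hlt j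
        simp only [n, Nat.add_sub_cancel, Nat.succ_ne_zero, if_false]
        omega
    refine ⟨n, fun j => ?_, ?_⟩
    · cases j with
      | zero => simp [n]
      | succ j =>
        have := hlt j
        simp only [n, Nat.add_sub_cancel, Nat.succ_ne_zero, if_false]
        omega
    · obtain ⟨J, hJ⟩ := eventually_atTop.1 (hc.eventually_lt_const hε)
      refine aux_forward _ (fun j => by split_ifs <;> norm_num) (J + 1) fun j hj => ?_
      obtain ⟨i, rfl⟩ : ∃ i, j = i + 1 := ⟨j - 1, by omega⟩
      have h1 := hJ (i + 1) (by omega)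
      have h2 := hfε (N i)
      rw [aux_block, hsum, hsum, Nat.add_sub_cancel, hN, if_neg]
      exact not_le.2 (h1.trans_le h2)
  · rintro h ⟨l, hl⟩
    obtain ⟨c, c0, ca, ct, hc⟩ := aux_c _ l hl
    obtain ⟨n, hn, ht⟩ := h c c0 ca ct
    refine aux_backward _ (fun j hj => ?_) ht
    rw [if_pos]
    rw [aux_block]
    refine hc j _ _ ?_ (aux_ge n hn _)
    exact (aux_ge n hn _).trans (aux_mono n j)
end

section
/- For a real parameter a > 0, consider the series S = ∑_{i=3}^∞ (1 − (log i/i)·a^{(log log i)/(log i)})^i, where a^{(log log i)/(log i)} is the real power. Then S converges if a > e and diverges if 0 < a ≤ e. -/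
open Filter

lemma aux_cond (c : ℝ) (hc : 0 ≤ c) :
    Summable (fun k : ℕ => 1 / (1 + (k:ℝ) * Real.log 2) ^ c) ↔
    Summable (fun n : ℕ => 1 / ((n:ℝ) * (1 + Real.log n) ^ c)) := by
  have h0 : ∀ n : ℕ, 0 < 1 + Real.log n := fun n => by
    have := Real.log_natCast_nonneg n
    linarith
  rw [← summable_condensed_iff_of_nonneg (f := fun n : ℕ => 1 / ((n:ℝ) * (1 + Real.log n) ^ c))]
  · apply iff_of_eq
    congr 1
    funext k
    push_cast
    rw [Real.log_pow]
    have : 0 < (1 + (k:ℝ) * Real.log 2) ^ c := by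
      have := Real.log_pos (x := 2) (by norm_num)
      positivity
    field_simp
  · intro n
    have := h0 n
    positivity
  · intro m n hm hmn
    have hm' : (0:ℝ) < m := by exact_mod_cast hm
    have hmn' : (m:ℝ) ≤ n := by exact_mod_cast hmn
    have := h0 m
    have hl := Real.log_le_log hm' hmn'
    apply one_div_le_one_div_of_le (by positivity)
    gcongr

lemma aux_conv (c : ℝ) (hc : 1 < c) :
    Summable (fun n : ℕ => 1 / ((n:ℝ) * (1 + Real.log n) ^ c)) := by
  rw [← aux_cond c (by linarith)]
  have hl := Real.log_pos (x := 2) (by norm_num)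
  have hl1 : Real.log 2 ≤ 1 := by linarith [Real.log_two_lt_d9]
  have h1 : Summable (fun k : ℕ => 1 / (((k + 1 : ℕ):ℝ)) ^ c) :=
    (summable_nat_add_iff 1).2 (Real.summable_one_div_nat_rpow.2 hc)
  refine Summable.of_nonneg_of_le (fun k => by positivity) (fun k => ?_)
    (h1.mul_left (1 / (Real.log 2) ^ c))
  rw [one_div_mul_one_div, ← Real.mul_rpow hl.le (by positivity)]
  apply one_div_le_one_div_of_le (by positivity)
  apply Real.rpow_le_rpow (by positivity) _ (by linarith)
  push_cast
  nlinarith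

lemma aux_div : ¬ Summable (fun n : ℕ => 1 / ((n:ℝ) * (1 + Real.log n))) := by
  intro h
  have h2 := (aux_cond 1 (by norm_num)).2 (by simpa using h)
  have hl := Real.log_pos (x := 2) (by norm_num)
  have hl1 : Real.log 2 ≤ 1 := by linarith [Real.log_two_lt_d9]
  apply Real.not_summable_one_div_natCast
  rw [← summable_nat_add_iff 1]
  refine Summable.of_nonneg_of_le (fun k => by positivity) (fun k => ?_) h2
  rw [Real.rpow_one]
  apply one_div_le_one_div_of_le (by positivity)
  push_cast
  nlinarith [(Nat.cast_nonneg k : (0:ℝ) ≤ k)]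

/-- the i-th term -/
noncomputable def auxT (a : ℝ) (i : ℕ) : ℝ :=
  (1 - (Real.log i / i) * a ^ (Real.log (Real.log i) / Real.log i)) ^ i

lemma aux_ev : ∀ᶠ i : ℕ in atTop, 1 ≤ Real.log i ∧ (Real.log i) ^ 2 / i ≤ 1 / 1800 ∧
    (Real.log (Real.log i)) ^ 2 / Real.log i ≤ 1 ∧ (1:ℝ) ≤ i := by
  have hn : Tendsto (fun i : ℕ => (i:ℝ)) atTop atTop := tendsto_natCast_atTop_atTop
  have hL : Tendsto (fun i : ℕ => Real.log (i:ℝ)) atTop atTop := Real.tendsto_log_atTop.comp hn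
  have hlo := (Real.isLittleO_pow_log_id_atTop (n := 2)).tendsto_div_nhds_zero
  have h1 := (hlo.comp hn).eventually_le_const (show (0:ℝ) < 1 / 1800 by norm_num)
  have h2 := (hlo.comp hL).eventually_le_const (show (0:ℝ) < 1 by norm_num)
  filter_upwards [hL.eventually_ge_atTop 1, h1, h2, hn.eventually_ge_atTop 1] with i a b c d
  exact ⟨a, b, c, d⟩

lemma aux_sum (f : ℕ → ℝ) (hf : ∀ᶠ i in atTop, 0 ≤ f i) :
    (∃ l : ℝ, Tendsto (fun N : ℕ => ∑ i ∈ Finset.Icc 3 N, f i) atTop (nhds l)) ↔ Summable f := by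
  have key : ∀ N : ℕ, 2 ≤ N → ∑ i ∈ Finset.Icc 3 N, f i
      = ∑ i ∈ Finset.range (N + 1), f i - ∑ i ∈ Finset.range 3, f i := by
    intro N hN
    rw [← Finset.sum_Ico_eq_sub _ (by omega)]
    rfl
  constructor
  · rintro ⟨l, hl⟩
    obtain ⟨K, hK⟩ := eventually_atTop.1 hf
    rw [← summable_nat_add_iff K]
    have h1 : Tendsto (fun N : ℕ => ∑ i ∈ Finset.range (N + 1), f i) atTop
        (nhds (l + ∑ i ∈ Finset.range 3, f i)) := by
      refine (hl.add_const _).congr' ?_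
      filter_upwards [eventually_ge_atTop 2] with N hN
      rw [key N hN]; ring
    have h2 : Tendsto (fun N : ℕ => ∑ i ∈ Finset.range N, f i) atTop
        (nhds (l + ∑ i ∈ Finset.range 3, f i)) := (tendsto_add_atTop_iff_nat 1).1 h1
    have h3 := ((tendsto_add_atTop_iff_nat K).2 h2).sub_const (∑ i ∈ Finset.range K, f i)
    refine ((hasSum_iff_tendsto_nat_of_nonneg (fun i => hK _ (by omega)) _).2
      (h3.congr fun n => ?_)).summable
    rw [add_comm n K, Finset.sum_range_add, add_sub_cancel_left]
    simp [add_comm]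
  · intro h
    refine ⟨∑' i, f i - ∑ i ∈ Finset.range 3, f i, ?_⟩
    refine (((tendsto_add_atTop_iff_nat 1).2 h.hasSum.tendsto_sum_nat).sub_const _).congr' ?_
    filter_upwards [eventually_ge_atTop 2] with N hN
    rw [key N hN]

/-- size of the subtracted quantity times i -/
lemma aux_x (a : ℝ) (ha : 0 < a) : ∀ᶠ i : ℕ in atTop, 
    0 ≤ 1 - (Real.log i / i) * a ^ (Real.log (Real.log i) / Real.log i) := by
  have hn : Tendsto (fun i : ℕ => (i:ℝ)) atTop atTop := tendsto_natCast_atTop_atTop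
  have hL : Tendsto (fun i : ℕ => Real.log (i:ℝ)) atTop atTop := Real.tendsto_log_atTop.comp hn
  have h1 := Real.isLittleO_log_id_atTop.tendsto_div_nhds_zero
  have h2 : Tendsto (fun i : ℕ => Real.log (i:ℝ) / i) atTop (nhds 0) := h1.comp hn
  have h3 : Tendsto (fun i : ℕ => Real.log (Real.log i) / Real.log i) atTop (nhds 0) := h1.comp hL
  have h4 := (Real.continuous_const_rpow ha.ne').continuousAt.tendsto.comp h3
  have h5 := (h2.mul h4).const_sub 1
  simp only [zero_mul, sub_zero] at h5
  exact h5.eventually_const_le one_pos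

lemma aux_upper (a : ℝ) (ha : Real.exp 1 < a) : Summable (auxT a) := by
  have ha0 : 0 < a := (Real.exp_pos 1).trans ha
  have hc : 1 < Real.log a := (Real.lt_log_iff_exp_lt ha0).2 ha
  set c := Real.log a with hcdef
  refine Summable.of_norm_bounded_eventually_nat ((aux_conv c hc).mul_left (2 ^ c)) ?_
  filter_upwards [aux_ev, aux_x a ha0] with i ⟨hL, h1, h2, hi⟩ hx
  rw [auxT, Real.norm_eq_abs, abs_of_nonneg (pow_nonneg hx _)]
  rw [Real.rpow_def_of_pos ha0, ← hcdef] at hx ⊢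
  set L := Real.log i with hLdef
  have hL0 : 0 < L := by linarith
  have hi0 : (0:ℝ) < i := by linarith
  have e1 := Real.add_one_le_exp (c * (Real.log L / L))
  have e2 : L + c * Real.log L ≤ i * (L / i * Real.exp (c * (Real.log L / L))) := by
    calc L + c * Real.log L = L * (c * (Real.log L / L) + 1) := by field_simp; ring
      _ ≤ L * Real.exp (c * (Real.log L / L)) := by gcongr
      _ = _ := by field_simp
  have e3 := Real.one_sub_le_exp_neg (L / i * Real.exp (c * (Real.log L / L)))
  calc _ ≤ (Real.exp (-(L / i * Real.exp (c * (Real.log L / L))))) ^ i := by gcongr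
    _ = Real.exp (-(i * (L / i * Real.exp (c * (Real.log L / L))))) := by
        rw [← Real.exp_nat_mul]; congr 1; ring
    _ ≤ Real.exp (-(L + c * Real.log L)) := by gcongr
    _ = 1 / (i * L ^ c) := by
        rw [Real.exp_neg, Real.exp_add, hLdef, Real.exp_log hi0, ← hLdef,
          Real.rpow_def_of_pos hL0, mul_comm c, one_div]
    _ = 2 ^ c * (1 / (i * (2 * L) ^ c)) := by
        rw [Real.mul_rpow (by norm_num) hL0.le]
        have : (0:ℝ) < 2 ^ c := by positivity
        field_simp
    _ ≤ 2 ^ c * (1 / (i * (1 + L) ^ c)) := by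
        gcongr
        linarith

lemma aux_lower (a : ℝ) (ha0 : 0 < a) (ha : a ≤ Real.exp 1) : ¬ Summable (auxT a) := by
  intro hs
  apply aux_div
  refine Summable.of_norm_bounded_eventually_nat (hs.mul_left (Real.exp 2)) ?_
  filter_upwards [aux_ev] with i ⟨hL, h1, h2, hi⟩
  have hc : Real.log a ≤ 1 := (Real.log_le_iff_le_exp ha0).2 ha
  rw [auxT, Real.rpow_def_of_pos ha0]
  set c := Real.log a
  set L := Real.log i with hLdef
  have hL0 : 0 < L := by linarith
  have hi0 : (0:ℝ) < i := by linarith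
  set M := Real.log L with hM
  have hM0 : 0 ≤ M := Real.log_nonneg hL
  have hML : M ≤ L := (Real.log_le_sub_one_of_pos hL0).trans (by linarith)
  have hy0 : 0 ≤ M / L := by positivity
  have hy1 : M / L ≤ 1 := (div_le_one hL0).2 hML
  have e1 : Real.exp (c * (M / L)) ≤ 1 + M / L + (M / L) ^ 2 := by
    have h := Real.abs_exp_sub_one_sub_id_le (x := M / L) (by rwa [abs_of_nonneg hy0])
    have := (abs_le.1 h).2
    have h' : Real.exp (c * (M / L)) ≤ Real.exp (M / L) := by
      gcongr; nlinarith
    linarith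
  have e2 : Real.exp (c * (M / L)) ≤ 3 := by nlinarith
  set x := L / i * Real.exp (c * (M / L)) with hx
  have hx0 : 0 ≤ x := by positivity
  have hix : i * x ≤ L + M + 1 := by
    calc i * x = L * Real.exp (c * (M / L)) := by rw [hx]; field_simp
      _ ≤ L * (1 + M / L + (M / L) ^ 2) := by gcongr
      _ = L + M + M ^ 2 / L := by field_simp
      _ ≤ _ := by gcongr
  have hx3 : x ≤ 3 * L / i := by
    calc x ≤ L / i * 3 := by rw [hx]; gcongr
      _ = _ := by ring
  have hx2 : x ≤ 1 / 2 := by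
    have : L / i ≤ L ^ 2 / i := by gcongr; nlinarith
    have : 3 * L / i = 3 * (L / i) := by ring
    linarith
  have hxx : 2 * i * x ^ 2 ≤ 1 := by
    calc 2 * i * x ^ 2 ≤ 2 * i * (3 * L / i) ^ 2 := by gcongr
      _ = 18 * (L ^ 2 / i) := by field_simp; ring
      _ ≤ 1 := by linarith
  have hlog : -x - 2 * x ^ 2 ≤ Real.log (1 - x) := by
    have h := Real.one_sub_inv_le_log_of_pos (x := 1 - x) (by linarith)
    have h' : (1 - x)⁻¹ ≤ 1 + x + 2 * x ^ 2 := by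
      rw [inv_le_iff_one_le_mul₀ (by linarith)]
      nlinarith [mul_nonneg (sq_nonneg x) (by linarith : 0 ≤ 1 - 2 * x)]
    linarith
  have hT : Real.exp (-(L + M + 2)) ≤ (1 - x) ^ i := by
    rw [← Real.exp_log (show 0 < 1 - x by linarith), ← Real.exp_nat_mul]
    gcongr
    have := mul_le_mul_of_nonneg_left hlog hi0.le
    nlinarith
  rw [Real.norm_eq_abs, abs_of_nonneg (by positivity)]
  calc 1 / (i * (1 + L)) ≤ 1 / (i * L) := by gcongr; linarith
    _ = Real.exp 2 * Real.exp (-(L + M + 2)) := by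
        rw [← Real.exp_add, show 2 + -(L + M + 2) = -(L + M) by ring, Real.exp_neg, Real.exp_add,
          hM, Real.exp_log hL0, hLdef, Real.exp_log hi0, one_div]
    _ ≤ _ := by gcongr

/-- for `a > 0`, the series
`S = ∑_{i=3}^∞ (1 - (log i / i) · a^{(log log i)/(log i)})^i`
converges if `a > e` and diverges if `0 < a ≤ e`. -/
theorem example3_series_convergence (a : ℝ) (ha : 0 < a) :
    (Real.exp 1 < a → ∃ l : ℝ,
      Tendsto (fun N : ℕ => ∑ i ∈ Finset.Icc 3 N,
        (1 - (Real.log i / i) * a ^ (Real.log (Real.log i) / Real.log i)) ^ i)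
        atTop (nhds l)) ∧
    (a ≤ Real.exp 1 → ¬ ∃ l : ℝ,
      Tendsto (fun N : ℕ => ∑ i ∈ Finset.Icc 3 N,
        (1 - (Real.log i / i) * a ^ (Real.log (Real.log i) / Real.log i)) ^ i)
        atTop (nhds l)) := by
  have hf : ∀ᶠ i in atTop, 0 ≤ auxT a i := by
    filter_upwards [aux_x a ha] with i hi
    exact pow_nonneg hi _
  have h := aux_sum (auxT a) hf
  exact ⟨fun h1 => h.2 (aux_upper a h1), fun h1 h2 => aux_lower a ha h1 (h.1 h2)⟩
end
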